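/- arXiv:1303.1284 — 5 statements merged into one kernel-verified Lean document; each statement's English description precedes it below -/
import Mathlib

section
/- Let Z¹ and Z² be independent generators on ℝ^d (defined on a common probability space), and suppose Z² generates the sup-norm, i.e. E(max_{1≤i≤d} |x_i| Z²_i) = max_{1≤i≤d} |x_i| for all x ∈ ℝ^d. Then for all x ∈ ℝ^d, E(max_{1≤i≤d} |x_i| Z¹_i Z²_i) = E(max_{1≤i≤d} |x_i| Z¹_i); in other words, the sup-norm is an identity element for the multiplication of D-norms. -/
/-!
Every coordinate of `Z₂` lies below `⨆ i, Z₂ i`, and if `Z₂` generates the sup-norm then, evaluating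
at `x = (1, …, 1)`, both have expectation `1`. Hence the coordinates of `Z₂` coincide almost surely
with a single random scalar `R ≥ 0` of mean `1`, so that `Z₁ Z₂ = R • Z₁`. The weighted maximum is
positively homogeneous and `R` is independent of `Z₁`, so `R` contributes only the factor `E R = 1`.
-/

open MeasureTheory ProbabilityTheory

section

variable {Ω ι : Type*} [MeasurableSpace Ω] {μ : Measure Ω}

theorem integrable_iSup [Finite ι] {Y : Ω → ι → ℝ} (hY : ∀ i, Integrable (fun ω => Y ω i) μ) :
    Integrable (fun ω => ⨆ i, Y ω i) μ := by
  cases isEmpty_or_nonempty ι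
  · simpa only [Real.iSup_of_isEmpty] using integrable_fun_zero Ω ℝ μ
  · have := Fintype.ofFinite ι
    simp only [← Finset.sup'_univ_eq_ciSup,
      ← Finset.sup'_apply Finset.univ_nonempty fun i ω => Y ω i]
    exact Finset.sup'_induction (p := (Integrable · μ)) _ _ (fun _ hf _ hg => hf.sup hg)
      fun i _ => hY i

theorem ae_forall_eq_iSup_of_integral_eq [Finite ι] {Y : Ω → ι → ℝ}
    (hY : ∀ i, Integrable (fun ω => Y ω i) μ)
    (h_eq : ∀ i, ∫ ω, Y ω i ∂μ = ∫ ω, ⨆ j, Y ω j ∂μ) :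
    ∀ᵐ ω ∂μ, ∀ i, Y ω i = ⨆ j, Y ω j := by
  refine ae_all_iff.2 fun i => ?_
  have h_le : (fun ω => Y ω i) ≤ᵐ[μ] fun ω => ⨆ j, Y ω j :=
    .of_forall fun ω => Finite.le_ciSup (Y ω) i
  exact (integral_eq_iff_of_ae_le (hY i) (integrable_iSup hY) h_le).1 (h_eq i)

theorem integral_comp_smul_eq_mul_of_posHomogeneous {E : Type*} [MeasurableSpace E] [SMul ℝ E]
    {f : E → ℝ} (hf : Measurable f) (hf_hom : ∀ c, 0 ≤ c → ∀ v, f (c • v) = c * f v)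
    {R : Ω → ℝ} {X : Ω → E} (hR : AEStronglyMeasurable R μ) (hX : AEMeasurable X μ)
    (hR_nonneg : 0 ≤ᵐ[μ] R) (hindep : IndepFun R X μ) :
    ∫ ω, f (R ω • X ω) ∂μ = (∫ ω, R ω ∂μ) * ∫ ω, f (X ω) ∂μ := by
  calc ∫ ω, f (R ω • X ω) ∂μ
    _ = ∫ ω, R ω * f (X ω) ∂μ := integral_congr_ae (hR_nonneg.mono fun ω hω => hf_hom _ hω _)
    _ = (∫ ω, R ω ∂μ) * ∫ ω, f (X ω) ∂μ :=
      (hindep.comp measurable_id hf).integral_fun_mul_eq_mul_integral hR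
        (hf.comp_aemeasurable hX).aestronglyMeasurable

theorem iSup_mul_smul_of_nonneg (a : ι → ℝ) {c : ℝ} (hc : 0 ≤ c) (z : ι → ℝ) :
    ⨆ i, a i * (c • z) i = c * ⨆ i, a i * z i := by
  simp only [Real.mul_iSup_of_nonneg hc, Pi.smul_apply, smul_eq_mul, mul_left_comm]

theorem supNorm_identity_for_dNorm_mul_general [Finite ι] {Z₁ Z₂ : Ω → ι → ℝ}
    (hZ₁int : ∀ i, Integrable (fun ω => Z₁ ω i) μ)
    (hZ₂int : ∀ i, Integrable (fun ω => Z₂ ω i) μ)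
    (hZ₂nn : ∀ i, ∀ᵐ ω ∂μ, 0 ≤ Z₂ ω i)
    (hZ₂mean : ∀ i, ∫ ω, Z₂ ω i ∂μ = 1)
    (hZ₂sup : ∫ ω, ⨆ i, Z₂ ω i ∂μ = 1)
    (hindep : IndepFun Z₁ Z₂ μ) (a : ι → ℝ) :
    ∫ ω, ⨆ i, a i * (Z₁ ω i * Z₂ ω i) ∂μ = ∫ ω, ⨆ i, a i * Z₁ ω i ∂μ := by
  let R : Ω → ℝ := fun ω => ⨆ j, Z₂ ω j
  have hZ₂_eq : ∀ᵐ ω ∂μ, ∀ i, Z₂ ω i = R ω :=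
    ae_forall_eq_iSup_of_integral_eq hZ₂int fun i => (hZ₂mean i).trans hZ₂sup.symm
  have hR_nonneg : 0 ≤ᵐ[μ] R := (ae_all_iff.2 hZ₂nn).mono fun _ hω => Real.iSup_nonneg hω
  have hR_indep : IndepFun R Z₁ μ :=
    hindep.symm.comp (.iSup fun i => measurable_pi_apply i) measurable_id
  have hZ₁_meas : AEMeasurable Z₁ μ := aemeasurable_pi_iff.2 fun i => (hZ₁int i).aemeasurable
  have h_sup_meas : Measurable fun z : ι → ℝ => ⨆ i, a i * z i :=
    .iSup fun i => (measurable_pi_apply i).const_mul _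
  calc ∫ ω, ⨆ i, a i * (Z₁ ω i * Z₂ ω i) ∂μ
    _ = ∫ ω, ⨆ i, a i * (R ω • Z₁ ω) i ∂μ := integral_congr_ae <| hZ₂_eq.mono fun ω hω => by
      simp only [hω, Pi.smul_apply, smul_eq_mul, mul_comm (R ω)]
    _ = (∫ ω, R ω ∂μ) * ∫ ω, ⨆ i, a i * Z₁ ω i ∂μ :=
      integral_comp_smul_eq_mul_of_posHomogeneous h_sup_meas
        (fun _ => iSup_mul_smul_of_nonneg a) (integrable_iSup hZ₂int).aestronglyMeasurable
        hZ₁_meas hR_nonneg hR_indep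
    _ = ∫ ω, ⨆ i, a i * Z₁ ω i ∂μ := by rw [hZ₂sup, one_mul]

end

/-- The sup-norm is an identity element for the multiplication of D-norms. -/
theorem supNorm_identity_for_dNorm_mul {d : ℕ} (hd : 0 < d) {Ω : Type*} [MeasurableSpace Ω]
    (μ : Measure Ω) [IsProbabilityMeasure μ]
    (Z₁ Z₂ : Ω → Fin d → ℝ)
    (hZ₁m : Measurable Z₁) (hZ₂m : Measurable Z₂)
    (hZ₁nn : ∀ i, ∀ᵐ ω ∂μ, 0 ≤ Z₁ ω i)
    (hZ₂nn : ∀ i, ∀ᵐ ω ∂μ, 0 ≤ Z₂ ω i)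
    (hZ₁int : ∀ i, Integrable (fun ω => Z₁ ω i) μ)
    (hZ₂int : ∀ i, Integrable (fun ω => Z₂ ω i) μ)
    (hZ₁mean : ∀ i, ∫ ω, Z₁ ω i ∂μ = 1)
    (hZ₂mean : ∀ i, ∫ ω, Z₂ ω i ∂μ = 1)
    (hindep : IndepFun Z₁ Z₂ μ)
    (hZ₂sup : ∀ x : Fin d → ℝ, (∫ ω, ⨆ i, |x i| * Z₂ ω i ∂μ) = ⨆ i, |x i|) :
    ∀ x : Fin d → ℝ,
      (∫ ω, ⨆ i, |x i| * (Z₁ ω i * Z₂ ω i) ∂μ) = ∫ ω, ⨆ i, |x i| * Z₁ ω i ∂μ := by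
  have : Nonempty (Fin d) := Fin.pos_iff_nonempty.1 hd
  exact fun x => supNorm_identity_for_dNorm_mul_general hZ₁int hZ₂int hZ₂nn hZ₂mean
    (by simpa using hZ₂sup 1) hindep fun i => |x i|
end

section
/- The product D-norm does not depend on the particular choice of generators: if Z¹, Z² are independent generators on ℝ^d and Z̃¹, Z̃² are independent generators on ℝ^d (possibly on a different probability space) such that E(max_{1≤i≤d} |x_i| Z¹_i) = E(max_{1≤i≤d} |x_i| Z̃¹_i) for all x ∈ ℝ^d and E(max_{1≤i≤d} |x_i| Z²_i) = E(max_{1≤i≤d} |x_i| Z̃²_i) for all x ∈ ℝ^d, then E(max_{1≤i≤d} |x_i| Z¹_i Z²_i) = E(max_{1≤i≤d} |x_i| Z̃¹_i Z̃²_i) for all x ∈ ℝ^d. -/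
open MeasureTheory ProbabilityTheory

/-!
Conditioning on the second factor turns the product D-norm into a mixture of values of the first
D-norm: for independent `X` and `Y ≥ 0`, the D-norm of `X * Y` at `x` is the expectation of the
D-norm of `X` at the random point `x * Y`, which depends on `X` only through its D-norm. Hence
`Z₁` may be replaced by `W₁`. By Fubini the same mixture, taken over independent copies, can be
read as an expectation over `W₁` of the D-norm of `Z₂`, so `Z₂` may be replaced by `W₂`.
-/

section Preliminaries

variable {ι Ω : Type*} [MeasurableSpace Ω] {μ : Measure Ω}

theorem integrable_iSup_of_finite [Finite ι] {f : ι → Ω → ℝ} (hf : ∀ i, Integrable (f i) μ) :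
    Integrable (fun ω ↦ ⨆ i, f i ω) μ := by
  cases nonempty_fintype ι
  cases isEmpty_or_nonempty ι
  · simp [Real.iSup_of_isEmpty]
  have hmeas : AEMeasurable (fun ω ↦ ⨆ i, f i ω) μ := .iSup fun i ↦ (hf i).aemeasurable
  have hsum : Integrable (fun ω ↦ ∑ i, ‖f i ω‖) μ := integrable_finsetSum _ fun i _ ↦ (hf i).norm
  refine hsum.mono' hmeas.aestronglyMeasurable (.of_forall fun ω ↦ ?_)
  obtain ⟨j, hj⟩ := exists_eq_ciSup_of_finite (f := fun i ↦ f i ω)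
  rw [← hj]
  exact Finset.single_le_sum (f := fun i ↦ ‖f i ω‖) (fun i _ ↦ norm_nonneg _) (Finset.mem_univ j)

theorem iSup_abs_mul_mul_of_nonneg (x y : ι → ℝ) {z : ι → ℝ} (hz : ∀ i, 0 ≤ z i) :
    ⨆ i, |x i| * (y i * z i) = ⨆ i, |(x * z) i| * y i := by
  refine iSup_congr fun i ↦ ?_
  rw [Pi.mul_apply, abs_mul, abs_of_nonneg (hz i), mul_right_comm, mul_assoc]

theorem identDistrib_comp_of_measurePreserving {Ω' E : Type*} [MeasurableSpace Ω']
    [MeasurableSpace E] {ν : Measure Ω'} {φ : Ω → Ω'} {X : Ω' → E} (hφ : MeasurePreserving φ μ ν)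
    (hX : AEMeasurable X ν) : IdentDistrib (X ∘ φ) X μ ν where
  aemeasurable_fst := hX.comp_quasiMeasurePreserving hφ.quasiMeasurePreserving
  aemeasurable_snd := hX
  map_eq := by
    rw [← hφ.map_eq] at hX
    rw [← hX.map_map_of_aemeasurable hφ.aemeasurable, hφ.map_eq]

theorem identDistrib_prodMk_of_indepFun {E F : Type*} [MeasurableSpace E] [MeasurableSpace F]
    [IsProbabilityMeasure μ] {X : Ω → E} {Y : Ω → F} (hX : AEMeasurable X μ)
    (hY : AEMeasurable Y μ) (hXY : IndepFun X Y μ) :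
    IdentDistrib (fun ω ↦ (X ω, Y ω)) (fun p : Ω × Ω ↦ (X p.1, Y p.2)) μ (μ.prod μ) := by
  have hfst : IdentDistrib X (fun p : Ω × Ω ↦ X p.1) μ (μ.prod μ) :=
    (identDistrib_comp_of_measurePreserving measurePreserving_fst hX).symm
  have hsnd : IdentDistrib Y (fun p : Ω × Ω ↦ Y p.2) μ (μ.prod μ) :=
    (identDistrib_comp_of_measurePreserving measurePreserving_snd hY).symm
  exact hfst.prodMk hsnd hXY (indepFun_prod₀ hX hY)

end Preliminaries

section DNorm

variable {ι Ω Ω' : Type*} [MeasurableSpace Ω] [MeasurableSpace Ω']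
  {μ : Measure Ω} {ν : Measure Ω'} {X : Ω → ι → ℝ} {Y : Ω' → ι → ℝ}

/-- The D-norm `‖x‖_D = E (max_i |x i| Z i)` generated by the random vector `Z` under `μ`. It is
defined for every `Z`, whether or not `Z` is a generator; the maximum is encoded as a real
supremum, with junk value `0` for an empty index type or an unbounded family. -/
noncomputable def dNorm (μ : Measure Ω) (Z : Ω → ι → ℝ) (x : ι → ℝ) : ℝ :=
  ∫ ω, ⨆ i, |x i| * Z ω i ∂μ

theorem dNorm_eq_of_identDistrib [Countable ι] (h : IdentDistrib X Y μ ν) (x : ι → ℝ) :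
    dNorm μ X x = dNorm ν Y x := by
  have hmeas : Measurable fun z : ι → ℝ ↦ ⨆ i, |x i| * z i := .iSup fun i ↦ by fun_prop
  exact (h.comp hmeas).integral_eq

theorem dNorm_prod_mul_comm [SFinite μ] [SFinite ν] (x : ι → ℝ) :
    dNorm (μ.prod ν) (fun p ↦ X p.1 * Y p.2) x = dNorm (ν.prod μ) (fun p ↦ Y p.1 * X p.2) x := by
  simp only [dNorm, mul_comm (X _)]
  exact (integral_prod_swap fun p : Ω × Ω' ↦ ⨆ i, |x i| * (Y p.2 * X p.1) i).symm

variable [Finite ι]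

theorem dNorm_prod_mul_eq_integral_dNorm [SFinite μ] [SFinite ν]
    (hX : ∀ i, Integrable (fun ω ↦ X ω i) μ) (hY : ∀ i, Integrable (fun ω ↦ Y ω i) ν)
    (hY₀ : ∀ i, ∀ᵐ ω ∂ν, 0 ≤ Y ω i) (x : ι → ℝ) :
    dNorm (μ.prod ν) (fun p ↦ X p.1 * Y p.2) x = ∫ ω, dNorm μ X (x * Y ω) ∂ν := by
  have hint : Integrable (fun p : Ω × Ω' ↦ ⨆ i, |x i| * (X p.1 i * Y p.2 i)) (μ.prod ν) :=
    integrable_iSup_of_finite fun i ↦ ((hX i).mul_prod (hY i)).const_mul |x i|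
  calc dNorm (μ.prod ν) (fun p ↦ X p.1 * Y p.2) x
      = ∫ ω', ∫ ω, ⨆ i, |x i| * (X ω i * Y ω' i) ∂μ ∂ν := integral_prod_symm _ hint
    _ = ∫ ω', dNorm μ X (x * Y ω') ∂ν := by
      refine integral_congr_ae ?_
      filter_upwards [ae_all_iff.2 hY₀] with ω' hω'
      exact integral_congr_ae (.of_forall fun ω ↦ iSup_abs_mul_mul_of_nonneg x (X ω) hω')

theorem integral_dNorm_mul_comm [SFinite μ] [SFinite ν]
    (hX : ∀ i, Integrable (fun ω ↦ X ω i) μ) (hY : ∀ i, Integrable (fun ω ↦ Y ω i) ν)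
    (hX₀ : ∀ i, ∀ᵐ ω ∂μ, 0 ≤ X ω i) (hY₀ : ∀ i, ∀ᵐ ω ∂ν, 0 ≤ Y ω i) (x : ι → ℝ) :
    ∫ ω, dNorm μ X (x * Y ω) ∂ν = ∫ ω, dNorm ν Y (x * X ω) ∂μ := by
  rw [← dNorm_prod_mul_eq_integral_dNorm hX hY hY₀, dNorm_prod_mul_comm,
    dNorm_prod_mul_eq_integral_dNorm hY hX hX₀]

theorem dNorm_mul_eq_integral_dNorm [IsProbabilityMeasure μ] {Y : Ω → ι → ℝ}
    (hX : ∀ i, Integrable (fun ω ↦ X ω i) μ) (hY : ∀ i, Integrable (fun ω ↦ Y ω i) μ)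
    (hY₀ : ∀ i, ∀ᵐ ω ∂μ, 0 ≤ Y ω i) (hXY : IndepFun X Y μ) (x : ι → ℝ) :
    dNorm μ (X * Y) x = ∫ ω, dNorm μ X (x * Y ω) ∂μ := by
  have hlaw : IdentDistrib (X * Y) (fun p : Ω × Ω ↦ X p.1 * Y p.2) μ (μ.prod μ) :=
    (identDistrib_prodMk_of_indepFun (aemeasurable_pi_lambda _ fun i ↦ (hX i).aemeasurable)
      (aemeasurable_pi_lambda _ fun i ↦ (hY i).aemeasurable) hXY).comp
      (measurable_fst.mul measurable_snd)
  rw [dNorm_eq_of_identDistrib hlaw, dNorm_prod_mul_eq_integral_dNorm hX hY hY₀]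

theorem dNorm_mul_wellDefined_general [IsProbabilityMeasure μ] [IsProbabilityMeasure ν]
    {Z₁ Z₂ : Ω → ι → ℝ} {W₁ W₂ : Ω' → ι → ℝ}
    (hZ₂₀ : ∀ i, ∀ᵐ ω ∂μ, 0 ≤ Z₂ ω i) (hW₁₀ : ∀ i, ∀ᵐ ω ∂ν, 0 ≤ W₁ ω i)
    (hZ₁ : ∀ i, Integrable (fun ω ↦ Z₁ ω i) μ) (hZ₂ : ∀ i, Integrable (fun ω ↦ Z₂ ω i) μ)
    (hW₁ : ∀ i, Integrable (fun ω ↦ W₁ ω i) ν) (hW₂ : ∀ i, Integrable (fun ω ↦ W₂ ω i) ν)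
    (hZ : IndepFun Z₁ Z₂ μ) (hW : IndepFun W₁ W₂ ν)
    (h₁ : ∀ x, dNorm μ Z₁ x = dNorm ν W₁ x) (h₂ : ∀ x, dNorm μ Z₂ x = dNorm ν W₂ x)
    (x : ι → ℝ) : dNorm μ (Z₁ * Z₂) x = dNorm ν (W₁ * W₂) x :=
  calc dNorm μ (Z₁ * Z₂) x
      = ∫ ω, dNorm μ Z₁ (x * Z₂ ω) ∂μ := dNorm_mul_eq_integral_dNorm hZ₁ hZ₂ hZ₂₀ hZ x
    _ = ∫ ω, dNorm ν W₁ (x * Z₂ ω) ∂μ := by simp only [h₁]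
    _ = ∫ ω, dNorm μ Z₂ (x * W₁ ω) ∂ν := integral_dNorm_mul_comm hW₁ hZ₂ hW₁₀ hZ₂₀ x
    _ = ∫ ω, dNorm ν W₂ (x * W₁ ω) ∂ν := by simp only [h₂]
    _ = dNorm ν (W₂ * W₁) x := (dNorm_mul_eq_integral_dNorm hW₂ hW₁ hW₁₀ hW.symm x).symm
    _ = dNorm ν (W₁ * W₂) x := by rw [mul_comm]

end DNorm

/-- The product D-norm does not depend on the particular choice of generators. -/
theorem dNorm_mul_wellDefined {d : ℕ} (hd : 0 < d)
    {Ω : Type*} [MeasurableSpace Ω] (μ : Measure Ω) [IsProbabilityMeasure μ]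
    {Ω' : Type*} [MeasurableSpace Ω'] (ν : Measure Ω') [IsProbabilityMeasure ν]
    (Z₁ Z₂ : Ω → Fin d → ℝ) (W₁ W₂ : Ω' → Fin d → ℝ)
    (hZ₁m : Measurable Z₁) (hZ₂m : Measurable Z₂)
    (hW₁m : Measurable W₁) (hW₂m : Measurable W₂)
    (hZ₁nn : ∀ i, ∀ᵐ ω ∂μ, 0 ≤ Z₁ ω i) (hZ₂nn : ∀ i, ∀ᵐ ω ∂μ, 0 ≤ Z₂ ω i)
    (hW₁nn : ∀ i, ∀ᵐ ω ∂ν, 0 ≤ W₁ ω i) (hW₂nn : ∀ i, ∀ᵐ ω ∂ν, 0 ≤ W₂ ω i)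
    (hZ₁int : ∀ i, Integrable (fun ω => Z₁ ω i) μ)
    (hZ₂int : ∀ i, Integrable (fun ω => Z₂ ω i) μ)
    (hW₁int : ∀ i, Integrable (fun ω => W₁ ω i) ν)
    (hW₂int : ∀ i, Integrable (fun ω => W₂ ω i) ν)
    (hZ₁mean : ∀ i, ∫ ω, Z₁ ω i ∂μ = 1) (hZ₂mean : ∀ i, ∫ ω, Z₂ ω i ∂μ = 1)
    (hW₁mean : ∀ i, ∫ ω, W₁ ω i ∂ν = 1) (hW₂mean : ∀ i, ∫ ω, W₂ ω i ∂ν = 1)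
    (hindepZ : IndepFun Z₁ Z₂ μ) (hindepW : IndepFun W₁ W₂ ν)
    (hsame₁ : ∀ x : Fin d → ℝ,
      (∫ ω, ⨆ i, |x i| * Z₁ ω i ∂μ) = ∫ ω, ⨆ i, |x i| * W₁ ω i ∂ν)
    (hsame₂ : ∀ x : Fin d → ℝ,
      (∫ ω, ⨆ i, |x i| * Z₂ ω i ∂μ) = ∫ ω, ⨆ i, |x i| * W₂ ω i ∂ν) :
    ∀ x : Fin d → ℝ,
      (∫ ω, ⨆ i, |x i| * (Z₁ ω i * Z₂ ω i) ∂μ) =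
        ∫ ω, ⨆ i, |x i| * (W₁ ω i * W₂ ω i) ∂ν := by
  exact dNorm_mul_wellDefined_general hZ₂nn hW₁nn hZ₁int hZ₂int hW₁int hW₂int hindepZ hindepW
    hsame₁ hsame₂
end

section
/- Let X be a real random variable with |X| ≤ c almost surely for some constant c > 0 and E(X) = 0, and let Y be an independent copy of X (Y independent of X and identically distributed). If E(|X + Y|) = E(|X|), then either X = 0 almost surely, or there exists m ∈ (0, c] such that P(X = −m) = P(X = m) = 1/2. -/
/-!
Conditioning on `X = x`, Jensen's inequality gives `E‖x + Y‖ ≥ ‖x‖`, so the hypothesis forces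
equality for almost every value `x`. By strict convexity, equality in Jensen's inequality for the
norm means that `x + Y` lies almost surely on the ray of its mean `x`. Exchanging the two copies,
`x + y` is on the rays of both `x` and `y`, so for almost all pairs of values either `y = -x` or
`y` is on the ray of `x`. If `0` is an atom, the equality at `x = 0` reads `E‖Y‖ = 0`. Otherwise fix
a typical `x ≠ 0`. Since the mean is zero, not all values are on its ray, so `-x` is an atom and
hence typical too; a nonzero value different from `±x` would be on the rays of both `x` and `-x`,
which is impossible. Thus `X = ±x` almost surely, with equal weights because the mean is zero.
-/

open MeasureTheory ProbabilityTheory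

section StrictConvex

variable {E : Type*} [NormedAddCommGroup E] [NormedSpace ℝ E]

section Integral

variable {α β : Type*} [MeasurableSpace α] [MeasurableSpace β] {μ : Measure α} {ν : Measure β}

lemma ae_sameRay_integral_of_integral_norm_eq [CompleteSpace E] [StrictConvexSpace ℝ E]
    {f : α → E} (hf : Integrable f μ) (h : ∫ a, ‖f a‖ ∂μ = ‖∫ a, f a ∂μ‖) :
    ∀ᵐ a ∂μ, SameRay ℝ (∫ b, f b ∂μ) (f a) := by
  obtain ⟨g, hg_norm, hg⟩ := exists_dual_vector'' ℝ (∫ a, f a ∂μ)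
  have g_le (x : E) : g x ≤ ‖x‖ :=
    (le_abs_self _).trans ((g.le_of_opNorm_le hg_norm x).trans_eq (one_mul _))
  have g_integral : ∫ a, g (f a) ∂μ = ∫ a, ‖f a‖ ∂μ := by
    rw [g.integral_comp_comm hf, hg, h]
    rfl
  have g_eq : ∀ᵐ a ∂μ, g (f a) = ‖f a‖ :=
    (integral_eq_iff_of_ae_le (g.integrable_comp hf) hf.norm (.of_forall fun a ↦ g_le (f a))).1
      g_integral
  filter_upwards [g_eq] with a ha
  refine sameRay_iff_norm_add.2 ((norm_add_le _ _).antisymm ?_)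
  calc ‖∫ b, f b ∂μ‖ + ‖f a‖ = g (∫ b, f b ∂μ + f a) := by rw [map_add, hg, ha]; rfl
    _ ≤ ‖∫ b, f b ∂μ + f a‖ := g_le _

lemma ae_eq_zero_of_integral_norm_eq_zero {F : Type*} [NormedAddCommGroup F] {f : α → F}
    (hf : Integrable f μ) (h : ∫ a, ‖f a‖ ∂μ = 0) : ∀ᵐ a ∂μ, f a = 0 := by
  filter_upwards [(integral_eq_zero_iff_of_nonneg (fun a ↦ norm_nonneg (f a)) hf.norm).1 h]
    with a ha using norm_eq_zero.1 ha

lemma ae_eq_zero_of_ae_sameRay_of_integral_eq_zero [CompleteSpace E] {f : α → E}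
    (hf : Integrable f μ) (hf_mean : ∫ a, f a ∂μ = 0) {x : E} (hx : x ≠ 0)
    (h : ∀ᵐ a ∂μ, SameRay ℝ x (f a)) :
    ∀ᵐ a ∂μ, f a = 0 := by
  have integral_smul_eq : (∫ a, ‖f a‖ ∂μ) • x = 0 :=
    calc (∫ a, ‖f a‖ ∂μ) • x = ∫ a, ‖f a‖ • x ∂μ := (integral_smul_const _ _).symm
      _ = ∫ a, ‖x‖ • f a ∂μ := integral_congr_ae (h.mono fun _ ha ↦ ha.norm_smul_eq.symm)
      _ = 0 := by rw [integral_smul, hf_mean, smul_zero]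
  have integral_norm_eq : ∫ a, ‖f a‖ ∂μ = 0 := (smul_eq_zero.1 integral_smul_eq).resolve_right hx
  exact ae_eq_zero_of_integral_norm_eq_zero hf integral_norm_eq

lemma integral_const_add_of_integral_eq_zero [CompleteSpace E] [IsProbabilityMeasure μ]
    {f : α → E} (hf : Integrable f μ) (hf_mean : ∫ a, f a ∂μ = 0) (x : E) :
    ∫ a, (x + f a) ∂μ = x := by
  rw [integral_add (integrable_const x) hf, hf_mean, integral_const, probReal_univ, one_smul,
    add_zero]

lemma ae_integral_norm_add_eq_norm [CompleteSpace E] [IsFiniteMeasure μ] [IsProbabilityMeasure ν]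
    {f : α → E} {g : β → E} (hf : Integrable f μ) (hg : Integrable g ν)
    (hg_mean : ∫ b, g b ∂ν = 0)
    (h : ∫ z, ‖f z.1 + g z.2‖ ∂(μ.prod ν) = ∫ a, ‖f a‖ ∂μ) :
    ∀ᵐ a ∂μ, ∫ b, ‖f a + g b‖ ∂ν = ‖f a‖ := by
  have h_int : Integrable (fun z : α × β ↦ ‖f z.1 + g z.2‖) (μ.prod ν) :=
    ((hf.comp_fst ν).add (hg.comp_snd μ)).norm
  have norm_le (a : α) : ‖f a‖ ≤ ∫ b, ‖f a + g b‖ ∂ν := by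
    simpa only [integral_const_add_of_integral_eq_zero hg hg_mean] using
      norm_integral_le_integral_norm (μ := ν) fun b ↦ f a + g b
  rw [integral_prod _ h_int] at h
  filter_upwards [(integral_eq_iff_of_ae_le hf.norm h_int.integral_prod_left
    (.of_forall norm_le)).1 h.symm] with a ha using ha.symm

end Integral

lemma eq_neg_or_sameRay_of_sameRay_add {x y : E} (hx : SameRay ℝ x (x + y))
    (hy : SameRay ℝ y (y + x)) : y = -x ∨ SameRay ℝ x y := by
  rw [add_comm] at hy
  by_cases hxy : x + y = 0
  · exact .inl (eq_neg_of_add_eq_zero_right hxy)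
  · exact .inr (hx.trans hy.symm fun h ↦ absurd h hxy)

section Law

variable [CompleteSpace E] [MeasurableSpace E] {ν : Measure E} [IsProbabilityMeasure ν]

lemma exists_ae_eq_or_eq_neg_of_ae_sameRay (hν : Integrable id ν) (hν_mean : ∫ x, x ∂ν = 0)
    (hν_ne : ∀ᵐ x ∂ν, x ≠ 0) (h : ∀ᵐ x ∂ν, ∀ᵐ y ∂ν, y = -x ∨ SameRay ℝ x y) :
    ∃ v : E, v ≠ 0 ∧ ∀ᵐ x ∂ν, x = v ∨ x = -v := by
  obtain ⟨v, hv, hv_ray⟩ := (hν_ne.and h).exists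
  have neg_atom : ∃ᵐ x ∂ν, x = -v := by
    intro h_ne
    have h_ray : ∀ᵐ x ∂ν, SameRay ℝ v x := by
      filter_upwards [h_ne, hv_ray] with x hx hx_ray using hx_ray.resolve_left hx
    have h_zero := ae_eq_zero_of_ae_sameRay_of_integral_eq_zero hν hν_mean hv h_ray
    obtain ⟨x, hx, hx_zero⟩ := (hν_ne.and h_zero).exists
    exact hx hx_zero
  obtain ⟨_, rfl, hneg_ray⟩ := (neg_atom.and_eventually h).exists
  refine ⟨v, hv, ?_⟩
  filter_upwards [hν_ne, hv_ray, hneg_ray] with x hx hx_ray hx_neg_ray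
  rw [neg_neg] at hx_neg_ray
  rcases hx_ray with hx_eq | hvx
  · exact .inr hx_eq
  rcases hx_neg_ray with hx_eq | hnegvx
  · exact .inl hx_eq
  exact absurd (eq_zero_of_sameRay_self_neg (hvx.trans hnegvx.symm fun h ↦ absurd h hx)) hv

lemma measure_singleton_eq_half_of_ae_eq_or_eq_neg [MeasurableSingletonClass E]
    (hν_mean : ∫ x, x ∂ν = 0) {v : E} (hv : v ≠ 0) (h : ∀ᵐ x ∂ν, x = v ∨ x = -v) :
    ν {-v} = 1 / 2 ∧ ν {v} = 1 / 2 := by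
  classical
  have h_univ : (({v, -v} : Finset E) : Set E) =ᵐ[ν] Set.univ :=
    Filter.eventuallyEq_univ.2 (h.mono fun x hx ↦ by simpa using hx)
  have : IsAddTorsionFree E := .of_isTorsionFree ℝ E
  have hv_ne : v ≠ -v := self_ne_neg.2 hv
  have h_total : ν.real {v} + ν.real {-v} = 1 := by
    rw [← Finset.sum_pair hv_ne (f := fun x ↦ ν.real {x}), sum_measureReal_singleton,
      measureReal_congr h_univ, probReal_univ]
  have h_mean : (ν.real {v} - ν.real {-v}) • v = 0 :=
    calc (ν.real {v} - ν.real {-v}) • v = ∑ x ∈ {v, -v}, ν.real {x} • x := by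
          rw [Finset.sum_pair hv_ne, smul_neg, sub_smul, sub_eq_add_neg]
      _ = ∫ x in ({v, -v} : Finset E), x ∂ν := (setIntegral_finset _ .finset).symm
      _ = 0 := by rw [setIntegral_congr_set h_univ, setIntegral_univ, hν_mean]
  have h_diff : ν.real {v} - ν.real {-v} = 0 := (smul_eq_zero.1 h_mean).resolve_right hv
  have h_half : ν.real {v} = 1 / 2 := by linarith
  have h_neg_half : ν.real {-v} = 1 / 2 := by linarith
  simp [← ofReal_measureReal, h_half, h_neg_half, ENNReal.ofReal_inv_of_pos]

variable [StrictConvexSpace ℝ E] [BorelSpace E] [SecondCountableTopology E]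

lemma ae_eq_neg_or_sameRay_of_ae_integral_norm_add_eq (hν : Integrable id ν)
    (hν_mean : ∫ x, x ∂ν = 0) (h : ∀ᵐ x ∂ν, ∫ y, ‖x + y‖ ∂ν = ‖x‖) :
    ∀ᵐ x ∂ν, ∀ᵐ y ∂ν, y = -x ∨ SameRay ℝ x y := by
  have h_ray : ∀ᵐ x ∂ν, ∀ᵐ y ∂ν, SameRay ℝ x (x + y) := by
    filter_upwards [h] with x hx
    have h_mean : ∫ y, (x + y) ∂ν = x := integral_const_add_of_integral_eq_zero hν hν_mean x
    have h_int : Integrable (fun y ↦ x + y) ν := (integrable_const x).add hν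
    simpa only [h_mean] using
      ae_sameRay_integral_of_integral_norm_eq h_int (hx.trans (congrArg norm h_mean.symm))
  have h_meas : MeasurableSet {z : E × E | SameRay ℝ z.1 (z.1 + z.2)} := by
    simp only [sameRay_iff_norm_smul_eq]
    exact measurableSet_eq_fun (by fun_prop) (by fun_prop)
  have h_ray_swap : ∀ᵐ x ∂ν, ∀ᵐ y ∂ν, SameRay ℝ y (y + x) := (Measure.ae_ae_comm h_meas).1 h_ray
  filter_upwards [h_ray, h_ray_swap] with x hx hx_swap
  filter_upwards [hx, hx_swap] with y using eq_neg_or_sameRay_of_sameRay_add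

lemma ae_eq_zero_or_measure_singleton_eq_half (hν : Integrable id ν) (hν_mean : ∫ x, x ∂ν = 0)
    (h : ∫ z, ‖z.1 + z.2‖ ∂(ν.prod ν) = ∫ x, ‖x‖ ∂ν) :
    (∀ᵐ x ∂ν, x = 0) ∨ ∃ v : E, v ≠ 0 ∧ ν {-v} = 1 / 2 ∧ ν {v} = 1 / 2 := by
  have h_eq : ∀ᵐ x ∂ν, ∫ y, ‖x + y‖ ∂ν = ‖x‖ := ae_integral_norm_add_eq_norm hν hν hν_mean h
  by_cases h_ne : ∀ᵐ x ∂ν, x ≠ 0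
  · obtain ⟨v, hv, h_pm⟩ := exists_ae_eq_or_eq_neg_of_ae_sameRay hν hν_mean h_ne
      (ae_eq_neg_or_sameRay_of_ae_integral_norm_add_eq hν hν_mean h_eq)
    exact .inr ⟨v, hv, measure_singleton_eq_half_of_ae_eq_or_eq_neg hν_mean hv h_pm⟩
  · have h_zero : ∃ᵐ x ∂ν, x = 0 := by simpa only [ne_eq, Filter.not_eventually, not_not] using h_ne
    obtain ⟨_, rfl, h_norm⟩ := (h_zero.and_eventually h_eq).exists
    simp only [zero_add, norm_zero] at h_norm
    exact .inl (ae_eq_zero_of_integral_norm_eq_zero hν h_norm)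

end Law

theorem characterization_of_E_abs_add_eq_general [CompleteSpace E] [StrictConvexSpace ℝ E]
    [MeasurableSpace E] [BorelSpace E] [SecondCountableTopology E]
    {Ω : Type*} [MeasurableSpace Ω] {μ : Measure Ω} [IsProbabilityMeasure μ]
    {X Y : Ω → E} (hX : Integrable X μ) (hX_mean : ∫ ω, X ω ∂μ = 0)
    (h_indep : IndepFun X Y μ) (h_ident : IdentDistrib Y X μ μ)
    (h : ∫ ω, ‖X ω + Y ω‖ ∂μ = ∫ ω, ‖X ω‖ ∂μ) :
    (∀ᵐ ω ∂μ, X ω = 0) ∨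
    ∃ v : E, v ≠ 0 ∧ μ {ω | X ω = -v} = 1 / 2 ∧ μ {ω | X ω = v} = 1 / 2 := by
  have hXm : AEMeasurable X μ := hX.aemeasurable
  have hYm : AEMeasurable Y μ := h_ident.aemeasurable_fst
  have : IsProbabilityMeasure (μ.map X) := Measure.isProbabilityMeasure_map hXm
  have map_prod : μ.map (fun ω ↦ (X ω, Y ω)) = (μ.map X).prod (μ.map X) := by
    rw [(indepFun_iff_map_prod_eq_prod_map_map hXm hYm).1 h_indep, h_ident.map_eq]
  have law_integrable : Integrable id (μ.map X) :=
    (integrable_map_measure (by fun_prop) hXm).2 hX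
  have law_mean : ∫ x, x ∂(μ.map X) = 0 := by
    rw [integral_map hXm (by fun_prop), hX_mean]
  have law_norm_add : ∫ z, ‖z.1 + z.2‖ ∂((μ.map X).prod (μ.map X)) = ∫ x, ‖x‖ ∂(μ.map X) := by
    rw [← map_prod, integral_map (hXm.prodMk hYm) (by fun_prop), integral_map hXm (by fun_prop), h]
  have measure_eq (v : E) : μ {ω | X ω = v} = μ.map X {v} :=
    (Measure.map_apply_of_aemeasurable hXm (measurableSet_singleton v)).symm
  simpa only [measure_eq] using
    (ae_eq_zero_or_measure_singleton_eq_half law_integrable law_mean law_norm_add).imp_left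
      (ae_of_ae_map hXm)

end StrictConvex

/-- If `X` is bounded, centered, `Y` is an independent copy of `X` and
`E|X + Y| = E|X|`, then `X = 0` a.s. or `X` is a symmetric two-point variable. -/
theorem characterization_of_E_abs_add_eq {Ω : Type*} [MeasurableSpace Ω]
    (μ : Measure Ω) [IsProbabilityMeasure μ]
    (X Y : Ω → ℝ) (hXm : Measurable X) (hYm : Measurable Y)
    (c : ℝ) (hc : 0 < c) (hbdd : ∀ᵐ ω ∂μ, |X ω| ≤ c)
    (hXint : Integrable X μ) (hXmean : ∫ ω, X ω ∂μ = 0)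
    (hindep : IndepFun X Y μ) (hid : μ.map Y = μ.map X)
    (heq : (∫ ω, |X ω + Y ω| ∂μ) = ∫ ω, |X ω| ∂μ) :
    (∀ᵐ ω ∂μ, X ω = 0) ∨
    ∃ m : ℝ, 0 < m ∧ m ≤ c ∧
      μ {ω | X ω = -m} = 1/2 ∧ μ {ω | X ω = m} = 1/2 := by
  refine (characterization_of_E_abs_add_eq_general hXint hXmean hindep
    ⟨hYm.aemeasurable, hXm.aemeasurable, hid⟩ heq).imp_right ?_
  rintro ⟨v, hv, h_neg, h_pos⟩
  have atom : ∃ᵐ ω ∂μ, X ω = v := frequently_ae_iff.2 (by simp [h_pos])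
  obtain ⟨ω, rfl, hω⟩ := (atom.and_eventually hbdd).exists
  refine ⟨|X ω|, abs_pos.2 hv, hω, ?_⟩
  rcases abs_choice (X ω) with h_abs | h_abs <;>
    simp only [h_abs, neg_neg, h_neg, h_pos, and_self]
end

section
/- If every bivariate projection of a D-norm is the L¹-norm, then the D-norm is the L¹-norm: let Z = (Z_1, …, Z_d) be a generator on ℝ^d such that for all 1 ≤ i < j ≤ d and all (x, y) ∈ ℝ², E(max(|x| Z_i, |y| Z_j)) = |x| + |y|. Then E(max_{1≤i≤d} |x_i| Z_i) = Σ_{i=1}^d |x_i| for all x ∈ ℝ^d. -/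
open MeasureTheory

/-!
Since `max a b + min a b = a + b`, the identity `E (max Z_i Z_j) = E Z_i + E Z_j` says that
`E (min Z_i Z_j) = 0`, so `min Z_i Z_j = 0` almost surely. Hence almost surely at most one
coordinate of `Z` is nonzero, and then the maximum of the `|x_i| Z_i` is their sum.
-/

section PairwiseMin

variable {ι M : Type*} [Nonempty ι]

theorem exists_forall_ne_eq_zero_of_pairwise_min_eq_zero [LinearOrder M] [Zero M] {f : ι → M}
    (hf : Pairwise fun i j => min (f i) (f j) = 0) : ∃ k, ∀ i, i ≠ k → f i = 0 := by
  by_cases hne : ∃ k, f k ≠ 0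
  · obtain ⟨k, hk⟩ := hne
    refine ⟨k, fun i hik => ?_⟩
    rcases min_choice (f i) (f k) with hmin | hmin
    · exact hmin.symm.trans (hf hik)
    · exact absurd (hmin.symm.trans (hf hik)) hk
  · push Not at hne
    exact ⟨Classical.arbitrary ι, fun i _ => hne i⟩

theorem ciSup_eq_sum_of_pairwise_min_eq_zero [Fintype ι] [ConditionallyCompleteLinearOrder M]
    [AddCommMonoid M] {f : ι → M} (hf : Pairwise fun i j => min (f i) (f j) = 0) :
    ⨆ i, f i = ∑ i, f i := by
  obtain ⟨k, hk⟩ := exists_forall_ne_eq_zero_of_pairwise_min_eq_zero hf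
  have hle (i : ι) : f i ≤ f k := by
    rcases eq_or_ne i k with rfl | hik
    · exact le_rfl
    · calc f i = min (f i) (f k) := (hk i hik).trans (hf hik).symm
        _ ≤ f k := min_le_right _ _
  calc ⨆ i, f i = f k := le_antisymm (ciSup_le hle) (le_ciSup (Set.finite_range f).bddAbove k)
    _ = ∑ i, f i := (Fintype.sum_eq_single k hk).symm

end PairwiseMin

theorem min_mul_mul_eq_zero {R : Type*} [MulZeroClass R] [LinearOrder R] [PosMulMono R]
    {a b u v : R} (ha : 0 ≤ a) (hb : 0 ≤ b) (huv : min u v = 0) : min (a * u) (b * v) = 0 := by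
  have hu : 0 ≤ u := huv.ge.trans (min_le_left u v)
  have hv : 0 ≤ v := huv.ge.trans (min_le_right u v)
  rcases min_choice u v with hmin | hmin
  · rw [← hmin, huv, mul_zero, min_eq_left (mul_nonneg hb hv)]
  · rw [← hmin, huv, mul_zero, min_eq_right (mul_nonneg ha hu)]

section Integral

variable {α : Type*} [MeasurableSpace α] {μ : Measure α}

theorem integral_min_add_integral_max {f g : α → ℝ} (hf : Integrable f μ) (hg : Integrable g μ) :
    ∫ a, min (f a) (g a) ∂μ + ∫ a, max (f a) (g a) ∂μ = ∫ a, f a ∂μ + ∫ a, g a ∂μ := by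
  calc ∫ a, min (f a) (g a) ∂μ + ∫ a, max (f a) (g a) ∂μ
      = ∫ a, min (f a) (g a) + max (f a) (g a) ∂μ := (integral_add (hf.inf hg) (hf.sup hg)).symm
    _ = ∫ a, f a + g a ∂μ := by simp only [min_add_max]
    _ = ∫ a, f a ∂μ + ∫ a, g a ∂μ := integral_add hf hg

theorem integral_max_eq_add_iff_min_ae_eq_zero {f g : α → ℝ} (hf : Integrable f μ)
    (hg : Integrable g μ) (hf0 : 0 ≤ᵐ[μ] f) (hg0 : 0 ≤ᵐ[μ] g) :
    ∫ a, max (f a) (g a) ∂μ = ∫ a, f a ∂μ + ∫ a, g a ∂μ ↔ ∀ᵐ a ∂μ, min (f a) (g a) = 0 := by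
  have hmin0 : 0 ≤ᵐ[μ] fun a => min (f a) (g a) := by
    filter_upwards [hf0, hg0] with a hfa hga using le_min hfa hga
  rw [← integral_min_add_integral_max hf hg, right_eq_add]
  exact integral_eq_zero_iff_of_nonneg_ae hmin0 (hf.inf hg)

theorem dNorm_eq_l1_of_bivariate_projections_general {ι : Type*} [Fintype ι] [Nonempty ι]
    {Z : α → ι → ℝ} (hZnn : ∀ i, ∀ᵐ a ∂μ, 0 ≤ Z a i)
    (hZint : ∀ i, Integrable (fun a => Z a i) μ)
    (hproj : Pairwise fun i j =>
      ∫ a, max (Z a i) (Z a j) ∂μ = ∫ a, Z a i ∂μ + ∫ a, Z a j ∂μ)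
    (x : ι → ℝ) : ∫ a, ⨆ i, |x i| * Z a i ∂μ = ∑ i, |x i| * ∫ a, Z a i ∂μ := by
  have hmin : ∀ᵐ a ∂μ, Pairwise fun i j => min (Z a i) (Z a j) = 0 := by
    simp only [Pairwise, ae_all_iff]
    exact fun i j hij => (integral_max_eq_add_iff_min_ae_eq_zero (hZint i) (hZint j)
      (hZnn i) (hZnn j)).1 (hproj hij)
  have hsup : ∀ᵐ a ∂μ, ⨆ i, |x i| * Z a i = ∑ i, |x i| * Z a i := by
    filter_upwards [hmin] with a ha
    exact ciSup_eq_sum_of_pairwise_min_eq_zero fun i j hij =>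
      min_mul_mul_eq_zero (abs_nonneg _) (abs_nonneg _) (ha hij)
  calc ∫ a, ⨆ i, |x i| * Z a i ∂μ = ∫ a, ∑ i, |x i| * Z a i ∂μ := integral_congr_ae hsup
    _ = ∑ i, ∫ a, |x i| * Z a i ∂μ := integral_finsetSum _ fun i _ => (hZint i).const_mul _
    _ = ∑ i, |x i| * ∫ a, Z a i ∂μ := by simp only [integral_const_mul]

end Integral

/-- If every bivariate projection of a D-norm is the L¹-norm, then the D-norm
is the L¹-norm. -/
theorem dNorm_eq_l1_of_bivariate_projections {d : ℕ} (hd : 0 < d)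
    {Ω : Type*} [MeasurableSpace Ω] (μ : Measure Ω) [IsProbabilityMeasure μ]
    (Z : Ω → Fin d → ℝ) (hZm : Measurable Z)
    (hZnn : ∀ i, ∀ᵐ ω ∂μ, 0 ≤ Z ω i)
    (hZint : ∀ i, Integrable (fun ω => Z ω i) μ)
    (hZmean : ∀ i, ∫ ω, Z ω i ∂μ = 1)
    (hproj : ∀ i j : Fin d, i < j → ∀ x y : ℝ,
      (∫ ω, max (|x| * Z ω i) (|y| * Z ω j) ∂μ) = |x| + |y|) :
    ∀ x : Fin d → ℝ, (∫ ω, ⨆ i, |x i| * Z ω i ∂μ) = ∑ i, |x i| := by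
  have : Nonempty (Fin d) := ⟨⟨0, hd⟩⟩
  have hpair : Pairwise fun i j =>
      ∫ ω, max (Z ω i) (Z ω j) ∂μ = ∫ ω, Z ω i ∂μ + ∫ ω, Z ω j ∂μ := fun i j hij => by
    rcases hij.lt_or_gt with h | h <;> simpa [hZmean, max_comm] using hproj _ _ h 1 1
  simpa [hZmean] using dNorm_eq_l1_of_bivariate_projections_general hZnn hZint hpair
end

section
/- Every D-norm on ℝ^d has a generator whose components sum to d: if Z = (Z_1, …, Z_d) is a generator of a D-norm ‖·‖_D, then there exist a probability space and a random vector Z' = (Z'_1, …, Z'_d) on it with Z'_i ≥ 0 almost surely, E(Z'_i) = 1 for 1 ≤ i ≤ d, Σ_{i=1}^d Z'_i = d almost surely, and E(max_{1≤i≤d} |x_i| Z'_i) = ‖x‖_D for all x ∈ ℝ^d. -/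
open MeasureTheory

/-!
Replace the probability measure `μ` by the measure with density `(∑ i, Z i) / d`, and `Z` by its
rescaling `(d / ∑ i, Z i) • Z`, whose components sum to `d`. For a positively homogeneous function
the density and the rescaling factor cancel, so its expectation is preserved. The coordinates and
`z ↦ max_i |x_i| z_i` are positively homogeneous.
-/

section PosHomogeneous

variable {E G : Type*} [AddCommGroup E] [Module ℝ E] [AddCommGroup G] [Module ℝ G]

/-- Positive homogeneity of degree one. The factor `0` is allowed, which forces `F 0 = 0`. -/
def IsPosHomogeneous (F : E → G) : Prop :=
  ∀ ⦃c : ℝ⦄, 0 ≤ c → ∀ x, F (c • x) = c • F x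

namespace IsPosHomogeneous

lemma map_zero {F : E → G} (hF : IsPosHomogeneous F) : F 0 = 0 := by
  simpa only [zero_smul] using hF le_rfl 0

lemma div_smul_map_div_smul {F : E → G} (hF : IsPosHomogeneous F) {c r : ℝ} (hc : 0 < c)
    (hr : 0 ≤ r) {x : E} (hx : r = 0 → x = 0) : (r / c) • F ((c / r) • x) = F x := by
  rcases hr.eq_or_lt' with hr₀ | hr₀
  · rw [hr₀, hx hr₀, zero_div, zero_smul, hF.map_zero]
  · rw [hF (by positivity), smul_smul, div_mul_div_cancel₀ hc.ne', div_self hr₀.ne', one_smul]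

lemma eval {ι : Type*} (i : ι) : IsPosHomogeneous (fun z : ι → ℝ => z i) :=
  fun _ _ _ => rfl

lemma iSup_mul {ι : Type*} (a : ι → ℝ) :
    IsPosHomogeneous (fun z : ι → ℝ => ⨆ i, a i * z i) := by
  intro c hc z
  simp only [Pi.smul_apply, smul_eq_mul, Real.mul_iSup_of_nonneg hc, mul_left_comm]

end IsPosHomogeneous

end PosHomogeneous

section SizeBiased

variable {Ω : Type*} [MeasurableSpace Ω] {μ : Measure Ω} {r : Ω → ℝ}

/-- The size-biased version of `μ` with respect to a nonnegative weight `r` with `0 < ∫ r ∂μ < ∞`: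
the probability measure proportional to `r` times `μ`. -/
noncomputable def sizeBiased (μ : Measure Ω) (r : Ω → ℝ) : Measure Ω :=
  μ.withDensity fun ω => ENNReal.ofReal (r ω / ∫ ω', r ω' ∂μ)

lemma sizeBiased_absolutelyContinuous : sizeBiased μ r ≪ μ :=
  withDensity_absolutelyContinuous _ _

lemma aemeasurable_sizeBiased_density (hpos : 0 < ∫ ω, r ω ∂μ) :
    AEMeasurable (fun ω => ENNReal.ofReal (r ω / ∫ ω', r ω' ∂μ)) μ :=
  ((Integrable.of_integral_ne_zero hpos.ne').aemeasurable.div_const _).ennreal_ofReal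

lemma isProbabilityMeasure_sizeBiased (hr : 0 ≤ᵐ[μ] r) (hpos : 0 < ∫ ω, r ω ∂μ) :
    IsProbabilityMeasure (sizeBiased μ r) := by
  have hint : Integrable (fun ω => r ω / ∫ ω', r ω' ∂μ) μ :=
    (Integrable.of_integral_ne_zero hpos.ne').div_const _
  have hnonneg : 0 ≤ᵐ[μ] fun ω => r ω / ∫ ω', r ω' ∂μ :=
    hr.mono fun ω hω => div_nonneg hω hpos.le
  refine ⟨?_⟩
  rw [sizeBiased, withDensity_apply _ .univ, Measure.restrict_univ,
    ← ofReal_integral_eq_lintegral_ofReal hint hnonneg, integral_div, div_self hpos.ne',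
    ENNReal.ofReal_one]

lemma ae_sizeBiased_pos (hpos : 0 < ∫ ω, r ω ∂μ) : ∀ᵐ ω ∂sizeBiased μ r, 0 < r ω := by
  rw [sizeBiased, ae_withDensity_iff' (aemeasurable_sizeBiased_density hpos)]
  refine .of_forall fun ω hω => ?_
  rwa [← pos_iff_ne_zero, ENNReal.ofReal_pos, div_pos_iff_of_pos_right hpos] at hω

variable {G : Type*} [NormedAddCommGroup G] [NormedSpace ℝ G]

lemma toReal_sizeBiased_density_smul_ae_eq (hr : 0 ≤ᵐ[μ] r) (hpos : 0 < ∫ ω, r ω ∂μ)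
    (f : Ω → G) :
    (fun ω => (ENNReal.ofReal (r ω / ∫ ω', r ω' ∂μ)).toReal • f ω)
      =ᵐ[μ] fun ω => (r ω / ∫ ω', r ω' ∂μ) • f ω :=
  hr.mono fun ω hω => by simp only [ENNReal.toReal_ofReal (div_nonneg hω hpos.le)]

lemma integrable_sizeBiased_iff (hr : 0 ≤ᵐ[μ] r) (hpos : 0 < ∫ ω, r ω ∂μ) {f : Ω → G} :
    Integrable f (sizeBiased μ r) ↔ Integrable (fun ω => (r ω / ∫ ω', r ω' ∂μ) • f ω) μ := by
  rw [sizeBiased, integrable_withDensity_iff_integrable_smul₀'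
    (aemeasurable_sizeBiased_density hpos) (.of_forall fun _ => ENNReal.ofReal_lt_top)]
  exact integrable_congr (toReal_sizeBiased_density_smul_ae_eq hr hpos f)

lemma integral_sizeBiased (hr : 0 ≤ᵐ[μ] r) (hpos : 0 < ∫ ω, r ω ∂μ) (f : Ω → G) :
    ∫ ω, f ω ∂sizeBiased μ r = ∫ ω, (r ω / ∫ ω', r ω' ∂μ) • f ω ∂μ := by
  rw [sizeBiased, integral_withDensity_eq_integral_toReal_smul₀
    (aemeasurable_sizeBiased_density hpos) (.of_forall fun _ => ENNReal.ofReal_lt_top)]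
  exact integral_congr_ae (toReal_sizeBiased_density_smul_ae_eq hr hpos f)

end SizeBiased

section NormalizedLaw

variable {Ω E G : Type*} [MeasurableSpace Ω] [AddCommGroup E] [Module ℝ E]
  [NormedAddCommGroup G] [NormedSpace ℝ G] {μ : Measure Ω} {r : Ω → ℝ} {X : Ω → E}

lemma IsPosHomogeneous.div_smul_comp_ae_eq {F : E → G} (hF : IsPosHomogeneous F)
    (hr : 0 ≤ᵐ[μ] r) (hpos : 0 < ∫ ω, r ω ∂μ) (hX₀ : ∀ᵐ ω ∂μ, r ω = 0 → X ω = 0) :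
    (fun ω => (r ω / ∫ ω', r ω' ∂μ) • F (((∫ ω', r ω' ∂μ) / r ω) • X ω))
      =ᵐ[μ] fun ω => F (X ω) := by
  filter_upwards [hr, hX₀] with ω hω hω₀
  exact hF.div_smul_map_div_smul hpos hω hω₀

variable [MeasurableSpace E]

/-- The law of `X`, rescaled from radius `r` to the constant radius `∫ r ∂μ`, under the size-biased
measure. When `r` is a norm of `X`, this is the angular measure of `X` on the sphere of radius
`∫ r ∂μ`, up to a constant factor. Where `r` vanishes the rescaling divides by zero, but the
size-biased measure does not charge that set. -/
noncomputable def normalizedLaw (μ : Measure Ω) (r : Ω → ℝ) (X : Ω → E) : Measure E :=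
  (sizeBiased μ r).map fun ω => ((∫ ω', r ω' ∂μ) / r ω) • X ω

lemma aemeasurable_normalize [MeasurableSMul₂ ℝ E] (hpos : 0 < ∫ ω, r ω ∂μ)
    (hX : AEMeasurable X μ) :
    AEMeasurable (fun ω => ((∫ ω', r ω' ∂μ) / r ω) • X ω) (sizeBiased μ r) :=
  have hr : AEMeasurable r μ := (Integrable.of_integral_ne_zero hpos.ne').aemeasurable
  ((hr.const_div _).smul hX).mono_ac sizeBiased_absolutelyContinuous

variable [MeasurableSMul₂ ℝ E]

lemma isProbabilityMeasure_normalizedLaw (hr : 0 ≤ᵐ[μ] r) (hpos : 0 < ∫ ω, r ω ∂μ)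
    (hX : AEMeasurable X μ) : IsProbabilityMeasure (normalizedLaw μ r X) :=
  have := isProbabilityMeasure_sizeBiased hr hpos
  Measure.isProbabilityMeasure_map (aemeasurable_normalize hpos hX)

lemma ae_normalizedLaw_of_ae (hpos : 0 < ∫ ω, r ω ∂μ) (hX : AEMeasurable X μ) {p : E → Prop}
    (hp : MeasurableSet {x | p x})
    (h : ∀ᵐ ω ∂μ, 0 < r ω → p (((∫ ω', r ω' ∂μ) / r ω) • X ω)) :
    ∀ᵐ x ∂normalizedLaw μ r X, p x := by
  rw [normalizedLaw, ae_map_iff (aemeasurable_normalize hpos hX) hp]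
  filter_upwards [ae_sizeBiased_pos hpos, sizeBiased_absolutelyContinuous.ae_le h] with ω hω hpω
  exact hpω hω

lemma integrable_normalizedLaw_iff {F : E → G} (hF : IsPosHomogeneous F)
    (hFm : StronglyMeasurable F) (hr : 0 ≤ᵐ[μ] r) (hpos : 0 < ∫ ω, r ω ∂μ)
    (hX : AEMeasurable X μ) (hX₀ : ∀ᵐ ω ∂μ, r ω = 0 → X ω = 0) :
    Integrable F (normalizedLaw μ r X) ↔ Integrable (fun ω => F (X ω)) μ := by
  rw [normalizedLaw, integrable_map_measure hFm.aestronglyMeasurable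
    (aemeasurable_normalize hpos hX), integrable_sizeBiased_iff hr hpos]
  exact integrable_congr (hF.div_smul_comp_ae_eq hr hpos hX₀)

lemma integral_normalizedLaw {F : E → G} (hF : IsPosHomogeneous F)
    (hFm : StronglyMeasurable F) (hr : 0 ≤ᵐ[μ] r) (hpos : 0 < ∫ ω, r ω ∂μ)
    (hX : AEMeasurable X μ) (hX₀ : ∀ᵐ ω ∂μ, r ω = 0 → X ω = 0) :
    ∫ x, F x ∂normalizedLaw μ r X = ∫ ω, F (X ω) ∂μ := by
  rw [normalizedLaw, integral_map (aemeasurable_normalize hpos hX) hFm.aestronglyMeasurable,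
    integral_sizeBiased hr hpos]
  exact integral_congr_ae (hF.div_smul_comp_ae_eq hr hpos hX₀)

end NormalizedLaw

theorem exists_generator_with_sum_d_general {ι Ω : Type*} [Fintype ι] [MeasurableSpace Ω]
    {μ : Measure Ω} {Z : Ω → ι → ℝ} (hZnn : ∀ i, ∀ᵐ ω ∂μ, 0 ≤ Z ω i)
    (hZint : ∀ i, Integrable (fun ω => Z ω i) μ) (hpos : 0 < ∑ i, ∫ ω, Z ω i ∂μ) :
    ∃ ν : Measure (ι → ℝ), IsProbabilityMeasure ν ∧
      (∀ i, ∀ᵐ z ∂ν, 0 ≤ z i) ∧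
      (∀ᵐ z ∂ν, ∑ i, z i = ∑ i, ∫ ω, Z ω i ∂μ) ∧
      ∀ F : (ι → ℝ) → ℝ, IsPosHomogeneous F → Measurable F →
        (Integrable F ν ↔ Integrable (fun ω => F (Z ω)) μ) ∧
        ∫ z, F z ∂ν = ∫ ω, F (Z ω) ∂μ := by
  have hZm : AEMeasurable Z μ := aemeasurable_pi_iff.2 fun i => (hZint i).aemeasurable
  have hZnn' : ∀ᵐ ω ∂μ, ∀ i, 0 ≤ Z ω i := ae_all_iff.2 hZnn
  have hsum_nn : 0 ≤ᵐ[μ] fun ω => ∑ i, Z ω i :=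
    hZnn'.mono fun ω hω => Finset.sum_nonneg fun i _ => hω i
  have hsum_zero : ∀ᵐ ω ∂μ, ∑ i, Z ω i = 0 → Z ω = 0 :=
    hZnn'.mono fun ω hω => (Fintype.sum_eq_zero_iff_of_nonneg hω).1
  rw [← integral_finsetSum _ fun i _ => hZint i] at hpos ⊢
  refine ⟨normalizedLaw μ (fun ω => ∑ i, Z ω i) Z,
    isProbabilityMeasure_normalizedLaw hsum_nn hpos hZm, fun i => ?_, ?_, fun F hF hFm =>
    ⟨integrable_normalizedLaw_iff hF hFm.stronglyMeasurable hsum_nn hpos hZm hsum_zero,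
      integral_normalizedLaw hF hFm.stronglyMeasurable hsum_nn hpos hZm hsum_zero⟩⟩
  · refine ae_normalizedLaw_of_ae hpos hZm (measurableSet_le (by fun_prop) (by fun_prop)) ?_
    filter_upwards [hZnn i] with ω hω hsum
    exact mul_nonneg (div_nonneg hpos.le hsum.le) hω
  · refine ae_normalizedLaw_of_ae hpos hZm (measurableSet_eq_fun (by fun_prop) (by fun_prop)) ?_
    refine .of_forall fun ω hsum => ?_
    simp only [Pi.smul_apply, smul_eq_mul, ← Finset.mul_sum, div_mul_cancel₀ _ hsum.ne']

/-- Every D-norm has a generator whose components sum to `d` almost surely. -/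
theorem exists_generator_with_sum_d {d : ℕ} (hd : 0 < d)
    {Ω : Type*} [MeasurableSpace Ω] (μ : Measure Ω) [IsProbabilityMeasure μ]
    (Z : Ω → Fin d → ℝ) (hZm : Measurable Z)
    (hZnn : ∀ i, ∀ᵐ ω ∂μ, 0 ≤ Z ω i)
    (hZint : ∀ i, Integrable (fun ω => Z ω i) μ)
    (hZmean : ∀ i, ∫ ω, Z ω i ∂μ = 1) :
    ∃ (Ω' : Type) (_ : MeasurableSpace Ω') (ν : Measure Ω'),
      IsProbabilityMeasure ν ∧
      ∃ Z' : Ω' → Fin d → ℝ,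
        Measurable Z' ∧
        (∀ i, ∀ᵐ ω ∂ν, 0 ≤ Z' ω i) ∧
        (∀ i, Integrable (fun ω => Z' ω i) ν) ∧
        (∀ i, ∫ ω, Z' ω i ∂ν = 1) ∧
        (∀ᵐ ω ∂ν, ∑ i, Z' ω i = d) ∧
        (∀ x : Fin d → ℝ,
          (∫ ω, ⨆ i, |x i| * Z' ω i ∂ν) = ∫ ω, ⨆ i, |x i| * Z ω i ∂μ) := by
  obtain ⟨ν, hν, hnn, hsum, hF⟩ :=
    exists_generator_with_sum_d_general hZnn hZint (by simpa [hZmean] using hd)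
  exact ⟨Fin d → ℝ, inferInstance, ν, hν, id, measurable_id, hnn,
    fun i => (hF _ (.eval i) (measurable_pi_apply i)).1.2 (hZint i),
    fun i => (hF _ (.eval i) (measurable_pi_apply i)).2.trans (hZmean i),
    by simpa [hZmean] using hsum,
    fun x => (hF _ (.iSup_mul _) (.iSup fun i => (measurable_pi_apply i).const_mul _)).2⟩
end
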